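/- arXiv:1802.01558 — 5 statements merged into one kernel-verified Lean document; each statement's English description precedes it below -/
import Mathlib

section
/- Let f : Ω → ℝ be bounded and measurable. Then ∫_Ω Gf dπ = 0; that is, the product measure π is invariant for the generator G of the environment seen from the walker on the randomly-oriented Manhattan lattice. -/
open MeasureTheory Real Filter Topology Finset

noncomputable section

namespace RWOML

/-- The `j`-th standard unit vector of `ℤ^d`. -/
def e (d : ℕ) (j : Fin d) : Fin d → ℤ := fun k => if k = j then 1 else 0

/-- The hyperplane `U_i = {x ∈ ℤ^d : x_i = 0}`. -/
abbrev U (d : ℕ) (i : Fin d) : Type := {x : Fin d → ℤ // x i = 0}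

/-- The index set of the lines of `ℤ^d`: pairs `(i, x)` with `x ∈ U_i`. -/
abbrev Idx (d : ℕ) : Type := Σ i : Fin d, U d i

/-- The space `Ω` of orientations (`±1`-valued, coded as `ℤˣ`) of all lines. -/
abbrev Env (d : ℕ) : Type := Idx d → ℤˣ

instance : MeasurableSpace ℤˣ := ⊤

/-- The coordinate `ω(i,x)` read as a real number (`±1`). -/
def chi {d : ℕ} (ω : Env d) {i : Fin d} (x : U d i) : ℝ := ((ω ⟨i, x⟩ : ℤ) : ℝ)

/-- The origin, as an element of `U_i`. -/
def o (d : ℕ) (i : Fin d) : U d i := ⟨0, rfl⟩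

/-- Translation `x ↦ x + ε e_j` on `U_i` (junk value when `j = i`, a case never used below). -/
def shift {d : ℕ} (j : Fin d) (ε : ℤ) {i : Fin d} (x : U d i) : U d i :=
  if h : j = i then x else
    ⟨fun k => x.1 k + ε * e d j k, by
      have hij : ¬ i = j := fun hh => h hh.symm
      simp [e, hij, x.2]⟩

/-- The translation `τ_i^{ε}` (`ε = ±1`) of the environment:
`(τ_i^{ε}ω)(j,x) = ω(j, x + ε e_i)` for `j ≠ i` and `(τ_i^{ε}ω)(i,x) = ω(i,x)`. -/
def tau {d : ℕ} (i : Fin d) (ε : ℤ) (ω : Env d) : Env d :=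
  fun q => ω ⟨q.1, shift i ε q.2⟩

/-- `μ` is the product over all lines `(i,x)` of the uniform measure on `{−1,1}`:
every cylinder set gets its product probability.  This uniquely characterises `π`. -/
def IsEnvMeasure {d : ℕ} (μ : Measure (Env d)) : Prop :=
  ∀ (s : Finset (Idx d)) (a : Env d),
    μ {ω | ∀ q ∈ s, ω q = a q} = (2 : ENNReal)⁻¹ ^ s.card

/-- The generator `G` of the environment seen from the walker. -/
def G {d : ℕ} (f : Env d → ℝ) (ω : Env d) : ℝ :=
  ∑ i : Fin d, ((1 + chi ω (o d i)) / 2 * f (tau i 1 ω)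
    + (1 - chi ω (o d i)) / 2 * f (tau i (-1) ω) - f ω)

/-- The adjoint `G*` of `G`. -/
def Gstar {d : ℕ} (f : Env d → ℝ) (ω : Env d) : ℝ :=
  ∑ i : Fin d, ((1 - chi ω (o d i)) / 2 * f (tau i 1 ω)
    + (1 + chi ω (o d i)) / 2 * f (tau i (-1) ω) - f ω)

/-- The symmetric part `S = (G + G*)/2`. -/
def S {d : ℕ} (f : Env d → ℝ) (ω : Env d) : ℝ :=
  (1 / 2) * ∑ i : Fin d, (f (tau i 1 ω) + f (tau i (-1) ω) - 2 * f ω)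

/-- The antisymmetric part `A = (G − G*)/2`. -/
def A {d : ℕ} (f : Env d → ℝ) (ω : Env d) : ℝ :=
  ∑ i : Fin d, chi ω (o d i) * (f (tau i 1 ω) - f (tau i (-1) ω))

/-- Fourier transform `û(p) = Σ_{x ∈ U_i} e^{𝐢 p·x} u(x)` of `u : U_i → ℝ` extended by `0`. -/
def uhat {d : ℕ} {i : Fin d} (u : U d i → ℝ) (p : Fin d → ℝ) : ℂ :=
  ∑' x : U d i, Complex.exp (Complex.I * (∑ j, p j * ((x.1 j : ℤ) : ℝ))) * (u x : ℂ)

/-- Fourier transform of a two-variable function `v : U_i × U_j → ℝ` extended by `0`. -/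
def vhat {d : ℕ} {i j : Fin d} (v : U d i → U d j → ℝ) (p q : Fin d → ℝ) : ℂ :=
  ∑' z : U d i × U d j,
    Complex.exp (Complex.I * ((∑ k, p k * ((z.1.1 k : ℤ) : ℝ)) + ∑ k, q k * ((z.2.1 k : ℤ) : ℝ)))
      * (v z.1 z.2 : ℂ)

/-- `d̂(p) = Σ_j 4 sin²(p_j/2)`. -/
def dhat {d : ℕ} (p : Fin d → ℝ) : ℝ := ∑ j, 4 * Real.sin (p j / 2) ^ 2

/-- The fundamental domain `[0,2π)^d` of the torus `𝕋^d`. -/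
def box (d : ℕ) : Set (Fin d → ℝ) := Set.univ.pi fun _ => Set.Ico 0 (2 * Real.pi)

/-- The cylinder set of the environments agreeing with `a` on the finite set `s`. -/
def cylinderSet {d : ℕ} (s : Finset (Idx d)) (a : Env d) : Set (Env d) :=
  {ω | ∀ q ∈ s, ω q = a q}

lemma measurableSet_cylinderSet {d : ℕ} (s : Finset (Idx d)) (a : Env d) :
    MeasurableSet (cylinderSet s a) := by
  have h : cylinderSet s a = ⋂ q ∈ s, (fun ω : Env d => ω q) ⁻¹' {a q} := by
    ext ω
    simp [cylinderSet]
  rw [h]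
  exact s.measurableSet_biInter fun q _ => measurable_pi_apply q trivial

/-- The family of all cylinder sets. -/
def cylinderSets (d : ℕ) : Set (Set (Env d)) :=
  {B | ∃ s a, B = cylinderSet s a}

lemma isPiSystem_cylinderSets (d : ℕ) : IsPiSystem (cylinderSets d) := by
  classical
  rintro _ ⟨s, a, rfl⟩ _ ⟨t, b, rfl⟩ ⟨c, hca, hcb⟩
  refine ⟨s ∪ t, c, ?_⟩
  ext ω
  constructor
  · rintro ⟨h₁, h₂⟩ q hq
    rcases Finset.mem_union.1 hq with hq | hq
    · rw [h₁ q hq, hca q hq]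
    · rw [h₂ q hq, hcb q hq]
  · intro h
    exact ⟨fun q hq => (h q (Finset.mem_union_left t hq)).trans (hca q hq),
      fun q hq => (h q (Finset.mem_union_right s hq)).trans (hcb q hq)⟩

lemma generateFrom_cylinderSets (d : ℕ) :
    (MeasurableSpace.pi : MeasurableSpace (Env d)) =
      MeasurableSpace.generateFrom (cylinderSets d) := by
  apply le_antisymm
  · refine iSup_le fun q => ?_
    rintro _ ⟨B, -, rfl⟩
    have h : (fun ω : Env d => ω q) ⁻¹' B = ⋃ v ∈ B, cylinderSet {q} fun _ => v := by
      ext ω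
      simp [cylinderSet]
    rw [h]
    exact MeasurableSet.biUnion (m := MeasurableSpace.generateFrom (cylinderSets d))
      B.to_countable fun v _ => MeasurableSpace.measurableSet_generateFrom ⟨_, _, rfl⟩
  · apply MeasurableSpace.generateFrom_le
    rintro _ ⟨s, a, rfl⟩
    exact measurableSet_cylinderSet s a

lemma IsEnvMeasure.isProbabilityMeasure {d : ℕ} {μ : Measure (Env d)} (hμ : IsEnvMeasure μ) :
    IsProbabilityMeasure μ :=
  ⟨by simpa using hμ ∅ 1⟩

/-- The product measure is determined by its values on cylinder sets. -/
lemma IsEnvMeasure.unique {d : ℕ} {μ ν : Measure (Env d)} (hμ : IsEnvMeasure μ)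
    (hν : IsEnvMeasure ν) : μ = ν := by
  have := hμ.isProbabilityMeasure
  have := hν.isProbabilityMeasure
  refine ext_of_generate_finite (cylinderSets d) (generateFrom_cylinderSets d)
    (isPiSystem_cylinderSets d) ?_ (by simp)
  rintro _ ⟨s, a, rfl⟩
  exact (hμ s a).trans (hν s a).symm

lemma shift_shift {d : ℕ} (j : Fin d) {ε δ : ℤ} (h : ε + δ = 0) {i : Fin d} (x : U d i) :
    shift j ε (shift j δ x) = x := by
  unfold shift
  split_ifs with hji
  · rfl
  · ext k
    linear_combination e d j k * h

/-- Translation by `ε e_i` as a permutation of the lines. -/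
def lineShift {d : ℕ} (i : Fin d) (ε : ℤ) : Equiv.Perm (Idx d) where
  toFun q := ⟨q.1, shift i ε q.2⟩
  invFun q := ⟨q.1, shift i (-ε) q.2⟩
  left_inv q := by simp [shift_shift i (neg_add_cancel ε)]
  right_inv q := by simp [shift_shift i (add_neg_cancel ε)]

lemma measurable_tau {d : ℕ} (i : Fin d) (ε : ℤ) : Measurable (tau (d := d) i ε) :=
  measurable_pi_lambda _ fun _ => measurable_pi_apply _

lemma preimage_tau_cylinderSet {d : ℕ} (i : Fin d) (ε : ℤ) (s : Finset (Idx d)) (a : Env d) :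
    tau i ε ⁻¹' cylinderSet s a =
      cylinderSet (s.map (lineShift i ε).toEmbedding) (a ∘ (lineShift i ε).symm) := by
  ext ω
  simp only [cylinderSet, Set.mem_preimage, Set.mem_ofPred_eq, Finset.forall_mem_map,
    Equiv.coe_toEmbedding, Function.comp_apply, Equiv.symm_apply_apply]
  rfl

lemma IsEnvMeasure.map_tau {d : ℕ} {μ : Measure (Env d)} (hμ : IsEnvMeasure μ)
    (i : Fin d) (ε : ℤ) : IsEnvMeasure (μ.map (tau i ε)) := by
  intro s a
  change μ.map (tau i ε) (cylinderSet s a) = _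
  rw [Measure.map_apply (measurable_tau i ε) (measurableSet_cylinderSet s a),
    preimage_tau_cylinderSet]
  exact (hμ _ _).trans (by rw [Finset.card_map])

lemma IsEnvMeasure.measurePreserving_tau {d : ℕ} {μ : Measure (Env d)} (hμ : IsEnvMeasure μ)
    (i : Fin d) (ε : ℤ) : MeasurePreserving (tau i ε) μ μ :=
  ⟨measurable_tau i ε, (hμ.map_tau i ε).unique hμ⟩

/-- The translation `τ_i` does not move the lines parallel to `e_i`. -/
lemma chi_tau {d : ℕ} (i : Fin d) (ε : ℤ) (ω : Env d) (x : U d i) :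
    chi (tau i ε ω) x = chi ω x := by
  simp [chi, tau, shift]

lemma measurable_chi {d : ℕ} {i : Fin d} (x : U d i) :
    Measurable fun ω : Env d => chi ω x :=
  (measurable_from_top (f := fun u : ℤˣ => ((u : ℤ) : ℝ))).comp
    (measurable_pi_apply (⟨i, x⟩ : Idx d))

lemma abs_chi {d : ℕ} (ω : Env d) {i : Fin d} (x : U d i) : |chi ω x| = 1 := by
  rcases Int.units_eq_one_or (ω ⟨i, x⟩) with h | h <;> simp [chi, h]

lemma IsEnvMeasure.integral_weight_mul_tau {d : ℕ} {μ : Measure (Env d)} (hμ : IsEnvMeasure μ)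
    {f : Env d → ℝ} (hf : Integrable f μ) (i : Fin d) (ε : ℤ) (c : ℝ) :
    Integrable (fun ω => (1 + c * chi ω (o d i)) / 2 * f ω) μ ∧
    Integrable (fun ω => (1 + c * chi ω (o d i)) / 2 * f (tau i ε ω)) μ ∧
    ∫ ω, (1 + c * chi ω (o d i)) / 2 * f (tau i ε ω) ∂μ =
      ∫ ω, (1 + c * chi ω (o d i)) / 2 * f ω ∂μ := by
  have hτ := hμ.measurePreserving_tau i ε
  have hw : Measurable fun ω : Env d => (1 + c * chi ω (o d i)) / 2 :=
    (((measurable_chi _).const_mul c).const_add 1).div_const 2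
  have hint : Integrable (fun ω => (1 + c * chi ω (o d i)) / 2 * f ω) μ := by
    refine hf.bdd_mul (c := (1 + |c|) / 2) hw.aestronglyMeasurable (ae_of_all _ fun ω => ?_)
    rw [Real.norm_eq_abs, abs_div, abs_two]
    have := abs_add_le 1 (c * chi ω (o d i))
    rw [abs_mul, abs_chi, abs_one, mul_one] at this
    linarith
  have hcomp : (fun ω => (1 + c * chi ω (o d i)) / 2 * f (tau i ε ω)) =
      (fun ω => (1 + c * chi ω (o d i)) / 2 * f ω) ∘ tau i ε := by
    ext ω
    simp [chi_tau]
  refine ⟨hint, hcomp ▸ hτ.integrable_comp_of_integrable hint, ?_⟩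
  have hmap := integral_map (μ := μ) hτ.measurable.aemeasurable
    (hτ.map_eq.symm ▸ hint.aestronglyMeasurable)
  rw [hτ.map_eq] at hmap
  rw [hmap, hcomp]
  rfl

/-- For bounded measurable `f : Ω → ℝ` one has `∫ Gf dπ = 0`, i.e. the product
measure `π` is invariant for the generator `G` of the environment seen from the walker. -/
theorem stmt0 (d : ℕ) (hd : 2 ≤ d) (μ : Measure (Env d)) (hμ : IsEnvMeasure μ)
    (f : Env d → ℝ) (hf_meas : Measurable f) (hf_bdd : ∃ C : ℝ, ∀ ω, |f ω| ≤ C) :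
    ∫ ω, G f ω ∂μ = 0 := by
  obtain ⟨C, hC⟩ := hf_bdd
  have := hμ.isProbabilityMeasure
  have hf : Integrable f μ :=
    Integrable.of_bound hf_meas.aestronglyMeasurable C (ae_of_all _ hC)
  have hterm : ∀ i : Fin d,
      Integrable (fun ω => (1 + chi ω (o d i)) / 2 * f (tau i 1 ω)
        + (1 - chi ω (o d i)) / 2 * f (tau i (-1) ω) - f ω) μ ∧
      ∫ ω, ((1 + chi ω (o d i)) / 2 * f (tau i 1 ω)
        + (1 - chi ω (o d i)) / 2 * f (tau i (-1) ω) - f ω) ∂μ = 0 := by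
    intro i
    obtain ⟨h₁, h₁', e₁⟩ := hμ.integral_weight_mul_tau hf i 1 1
    obtain ⟨h₂, h₂', e₂⟩ := hμ.integral_weight_mul_tau hf i (-1) (-1)
    simp only [one_mul, neg_one_mul, ← sub_eq_add_neg] at h₁ h₁' e₁ h₂ h₂' e₂
    refine ⟨(h₁'.add h₂').sub hf, ?_⟩
    have hsum : ∫ ω, f ω ∂μ = ∫ ω, (1 + chi ω (o d i)) / 2 * f ω ∂μ
        + ∫ ω, (1 - chi ω (o d i)) / 2 * f ω ∂μ := by
      rw [← integral_add h₁ h₂]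
      congr 1 with ω
      ring
    rw [integral_sub (by exact h₁'.add h₂') hf, integral_add h₁' h₂', e₁, e₂, hsum, sub_self]
  unfold G
  rw [integral_finsetSum _ fun i _ => (hterm i).1]
  exact Finset.sum_eq_zero fun i _ => (hterm i).2

end RWOML
end
end

section
/- Let d = 3. There exists a finite constant C such that for all p ∈ 𝕋³ and all 0 < λ ≤ 1/3, (2π)^{−3} ∫_{𝕋³} (λ + (1/2) d̂(q^{(2)} + p^{(1)}))^{−1} dq ≤ C |log(λ + (1/2) sin²(p_2/2))|. -/
open MeasureTheory Real Filter Topology Finset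

noncomputable section

namespace RWOML

/-- Jordan's inequality in the form used to compare the lattice symbol with `x ^ 2`. -/
lemma sq_div_pi_le_two_mul_sin_half_sq {x : ℝ} (hx : x ∈ Set.Icc (-π) π) :
    (x / π) ^ 2 ≤ 2 * sin (x / 2) ^ 2 := by
  have key : ∀ y : ℝ, 0 ≤ y → y ≤ π → (y / π) ^ 2 ≤ 2 * sin (y / 2) ^ 2 := by
    intro y hy hy'
    have h := mul_le_sin (x := y / 2) (by linarith) (by linarith)
    have h' : y / π ≤ sin (y / 2) := by
      calc y / π = 2 / π * (y / 2) := by ring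
        _ ≤ _ := h
    have h0 : 0 ≤ y / π := div_nonneg hy pi_pos.le
    nlinarith [pow_le_pow_left₀ h0 h' 2, sq_nonneg (sin (y / 2))]
  rcases le_total 0 x with h | h
  · exact key x h hx.2
  · simpa [neg_div] using key (-x) (by linarith) (by linarith [hx.1])

lemma setIntegral_comp_sin_half_sq (φ : ℝ → ℝ) (t : ℝ) :
    ∫ x in Set.Ico 0 (2 * π), φ (sin ((x + t) / 2) ^ 2) = ∫ x in -π..π, φ (sin (x / 2) ^ 2) := by
  have hper : Function.Periodic (fun x : ℝ => φ (sin (x / 2) ^ 2)) (2 * π) := by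
    intro x
    have : (x + 2 * π) / 2 = x / 2 + π := by ring
    simp [this, sin_add_pi]
  have h := hper.intervalIntegral_add_eq t (-π)
  have h1 : -π + 2 * π = π := by ring
  rw [integral_Ico_eq_integral_Ioc, ← intervalIntegral.integral_of_le two_pi_pos.le,
    intervalIntegral.integral_comp_add_right (fun x => φ (sin (x / 2) ^ 2)), zero_add,
    add_comm (2 * π), h, h1]

lemma integral_inv_add_two_mul_sin_half_sq_le {b : ℝ} (hb : 0 < b) :
    ∫ x in -π..π, (b + 2 * sin (x / 2) ^ 2)⁻¹ ≤ π ^ 2 * (√b)⁻¹ := by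
  have hs : 0 < √b := sqrt_pos.2 hb
  have hpi := pi_pos
  have hcont : Continuous fun x : ℝ => (b + (x / π) ^ 2)⁻¹ :=
    Continuous.inv₀ (by fun_prop) fun x => by positivity
  have hcont' : Continuous fun x : ℝ => (b + 2 * sin (x / 2) ^ 2)⁻¹ :=
    Continuous.inv₀ (by fun_prop) fun x => by positivity
  have hderiv : ∀ x : ℝ, HasDerivAt (fun x => π / √b * arctan (x / (π * √b)))
      ((b + (x / π) ^ 2)⁻¹) x := by
    intro x
    refine (((hasDerivAt_id x).div_const (π * √b)).arctan.const_mul (π / √b)).congr_deriv ?_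
    have h2 : √b ^ 2 = b := sq_sqrt hb.le
    simp only [id]
    rw [div_pow, div_pow, mul_pow, h2]
    field_simp
    rw [h2]
  calc ∫ x in -π..π, (b + 2 * sin (x / 2) ^ 2)⁻¹
      ≤ ∫ x in -π..π, (b + (x / π) ^ 2)⁻¹ := by
        refine intervalIntegral.integral_mono_on (by linarith) (hcont'.intervalIntegrable _ _)
          (hcont.intervalIntegrable _ _) fun x hx => ?_
        have := sq_div_pi_le_two_mul_sin_half_sq hx
        gcongr
    _ = π / √b * arctan (π / (π * √b)) - π / √b * arctan (-π / (π * √b)) :=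
        intervalIntegral.integral_eq_sub_of_hasDerivAt (fun x _ => hderiv x)
          (hcont.intervalIntegrable _ _)
    _ ≤ π / √b * (π / 2) - π / √b * (-(π / 2)) := by
        gcongr
        · exact (arctan_lt_pi_div_two _).le
        · exact (neg_pi_div_two_lt_arctan _).le
    _ = π ^ 2 * (√b)⁻¹ := by ring

lemma arsinh_inv_sqrt_le {m : ℝ} (hm : 0 < m) (hm1 : m ≤ 1) :
    arsinh (√m)⁻¹ ≤ log 3 - log m / 2 := by
  have hs : 0 < √m := sqrt_pos.2 hm
  have hs1 : 1 ≤ (√m)⁻¹ := (one_le_inv₀ hs).2 (sqrt_le_one.2 hm1)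
  have h : √(1 + (√m)⁻¹ ^ 2) ≤ 2 * (√m)⁻¹ := by
    rw [sqrt_le_left (by positivity)]
    nlinarith
  calc arsinh (√m)⁻¹ ≤ log (3 * (√m)⁻¹) := by
        unfold arsinh
        exact log_le_log (by positivity) (by linarith)
    _ = log 3 - log m / 2 := by
        rw [log_mul (by norm_num) (by positivity), log_inv, log_sqrt hm.le, sub_eq_add_neg]

lemma integral_inv_sqrt_add_two_mul_sin_half_sq_le {m : ℝ} (hm : 0 < m) (hm1 : m ≤ 1) :
    ∫ x in -π..π, (√(m + 2 * sin (x / 2) ^ 2))⁻¹ ≤ 2 * π * (log 3 - log m / 2) := by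
  have hs : 0 < √m := sqrt_pos.2 hm
  have hpi := pi_pos
  have hcont : Continuous fun x : ℝ => (√(m + (x / π) ^ 2))⁻¹ :=
    Continuous.inv₀ (by fun_prop) fun x => by positivity
  have hcont' : Continuous fun x : ℝ => (√(m + 2 * sin (x / 2) ^ 2))⁻¹ :=
    Continuous.inv₀ (by fun_prop) fun x => by positivity
  have hderiv : ∀ x : ℝ, HasDerivAt (fun x => π * arsinh (x / (π * √m)))
      ((√(m + (x / π) ^ 2))⁻¹) x := by
    intro x
    refine (((hasDerivAt_id x).div_const (π * √m)).arsinh.const_mul π).congr_deriv ?_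
    have h2 : √m ^ 2 = m := sq_sqrt hm.le
    have h3 : m + (x / π) ^ 2 = m * (1 + (x / (π * √m)) ^ 2) := by
      rw [div_pow, div_pow, mul_pow, h2]
      field_simp
    simp only [id, smul_eq_mul]
    rw [h3, sqrt_mul hm.le]
    field_simp
  calc ∫ x in -π..π, (√(m + 2 * sin (x / 2) ^ 2))⁻¹
      ≤ ∫ x in -π..π, (√(m + (x / π) ^ 2))⁻¹ := by
        refine intervalIntegral.integral_mono_on (by linarith) (hcont'.intervalIntegrable _ _)
          (hcont.intervalIntegrable _ _) fun x hx => ?_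
        have := sq_div_pi_le_two_mul_sin_half_sq hx
        gcongr
    _ = π * arsinh (π / (π * √m)) - π * arsinh (-π / (π * √m)) :=
        intervalIntegral.integral_eq_sub_of_hasDerivAt (fun x _ => hderiv x)
          (hcont.intervalIntegrable _ _)
    _ = 2 * π * arsinh (√m)⁻¹ := by
        have h : π / (π * √m) = (√m)⁻¹ := by field_simp
        rw [neg_div, arsinh_neg, h]
        ring
    _ ≤ 2 * π * (log 3 - log m / 2) := by
        gcongr
        exact arsinh_inv_sqrt_le hm hm1

/-- Integrating a function of the outer coordinates over `[0,2π)³`. -/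
lemma setIntegral_box_three (g : ℝ → ℝ → ℝ) :
    ∫ q in box 3, g (q 0) (q 2) =
      2 * π * ∫ z, g z.1 z.2 ∂((volume.restrict (Set.Ico 0 (2 * π))).prod
        (volume.restrict (Set.Ico 0 (2 * π)))) := by
  have hpi := pi_pos
  set μ : Measure ℝ := volume.restrict (Set.Ico 0 (2 * π)) with hμ
  have h1 := (measurePreserving_piFinSuccAbove (n := 2) (fun _ => μ) 1).integral_comp'
    (fun z : ℝ × (Fin 2 → ℝ) => g (z.2 0) (z.2 1))
  have h2 := (measurePreserving_piFinTwo (fun _ => μ)).integral_comp'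
    (fun z : ℝ × ℝ => g z.1 z.2)
  rw [box, volume_pi, Measure.restrict_pi_pi]
  refine h1.trans ?_
  rw [integral_fun_snd (fun z : Fin 2 → ℝ => g (z 0) (z 1)), smul_eq_mul]
  refine congrArg₂ _ ?_ h2
  simp [hμ, hpi.le]

lemma setIntegral_box_three_inv_le {m t : ℝ} (hm : 0 < m) (hm1 : m ≤ 1) :
    ∫ q in box 3, (m + 2 * sin (q 0 / 2) ^ 2 + 2 * sin ((q 2 + t) / 2) ^ 2)⁻¹ ≤
      2 * π * (π ^ 2 * (2 * π * (log 3 - log m / 2))) := by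
  have hpi := pi_pos
  set μ : Measure ℝ := volume.restrict (Set.Ico 0 (2 * π)) with hμ
  have hcont : Continuous fun z : ℝ × ℝ =>
      (m + 2 * sin (z.1 / 2) ^ 2 + 2 * sin ((z.2 + t) / 2) ^ 2)⁻¹ :=
    Continuous.inv₀ (by fun_prop) fun x => by positivity
  have hint : Integrable (fun z : ℝ × ℝ =>
      (m + 2 * sin (z.1 / 2) ^ 2 + 2 * sin ((z.2 + t) / 2) ^ 2)⁻¹) (μ.prod μ) := by
    refine Integrable.of_bound hcont.aestronglyMeasurable m⁻¹ (.of_forall fun z => ?_)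
    rw [norm_of_nonneg (by positivity)]
    gcongr
    nlinarith [sq_nonneg (sin (z.1 / 2)), sq_nonneg (sin ((z.2 + t) / 2))]
  have hcont' : Continuous fun x : ℝ => (√(m + 2 * sin (x / 2) ^ 2))⁻¹ :=
    Continuous.inv₀ (by fun_prop) fun x => by positivity
  have hint' : Integrable (fun x : ℝ => (√(m + 2 * sin (x / 2) ^ 2))⁻¹) μ := by
    refine Integrable.of_bound hcont'.aestronglyMeasurable (√m)⁻¹ (.of_forall fun x => ?_)
    rw [norm_of_nonneg (by positivity)]
    gcongr
    nlinarith [sq_nonneg (sin (x / 2))]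
  rw [setIntegral_box_three
    (fun x y => (m + 2 * sin (x / 2) ^ 2 + 2 * sin ((y + t) / 2) ^ 2)⁻¹), integral_prod _ hint]
  gcongr
  calc ∫ x, ∫ y, (m + 2 * sin (x / 2) ^ 2 + 2 * sin ((y + t) / 2) ^ 2)⁻¹ ∂μ ∂μ
      ≤ ∫ x, π ^ 2 * (√(m + 2 * sin (x / 2) ^ 2))⁻¹ ∂μ := by
        refine integral_mono hint.integral_prod_left (hint'.const_mul _) fun x => ?_
        have h := setIntegral_comp_sin_half_sq
          (fun s => (m + 2 * sin (x / 2) ^ 2 + 2 * s)⁻¹) t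
        exact h.trans_le (integral_inv_add_two_mul_sin_half_sq_le (by positivity))
    _ = π ^ 2 * ∫ x in -π..π, (√(m + 2 * sin (x / 2) ^ 2))⁻¹ := by
        have h := setIntegral_comp_sin_half_sq (fun s => (√(m + 2 * s))⁻¹) 0
        simp only [add_zero] at h
        rw [integral_const_mul, h]
    _ ≤ π ^ 2 * (2 * π * (log 3 - log m / 2)) := by
        gcongr
        exact integral_inv_sqrt_add_two_mul_sin_half_sq_le hm hm1

/-- `d = 3`: There is `C < ∞` with, for all `p ∈ 𝕋³` and `0 < λ ≤ 1/3`,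
`(2π)^{−3} ∫_{𝕋³} (λ + (1/2) d̂(q^{(2)}+p^{(1)}))^{−1} dq ≤ C |log(λ + (1/2) sin²(p_2/2))|`. -/
theorem stmt10 :
    ∃ C : ℝ, 0 < C ∧ ∀ p ∈ box 3, ∀ lam : ℝ, 0 < lam → lam ≤ 1 / 3 →
      ((2 * Real.pi) ^ 3)⁻¹ *
          ∫ q in box 3, (lam + (1 / 2) * dhat (Function.update q 1 0 + Function.update p 0 0))⁻¹
        ≤ C * |Real.log (lam + (1 / 2) * Real.sin (p 1 / 2) ^ 2)| := by
  have hpi := pi_pos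
  have hc : 0 < log (6 / 5) := log_pos (by norm_num)
  have h3 : 0 < log 3 := log_pos (by norm_num)
  refine ⟨((2 * π) ^ 3)⁻¹ * (2 * π * (π ^ 2 * (2 * π * (log 3 / log (6 / 5) + 1 / 2)))),
    by positivity, fun p _ lam hlam hlam' => ?_⟩
  set m : ℝ := lam + 1 / 2 * sin (p 1 / 2) ^ 2 with hm_def
  have hm : 0 < m := by positivity
  have hm56 : m ≤ 5 / 6 := by linarith [sin_sq_le_one (p 1 / 2)]
  have hlog : log (6 / 5) ≤ -log m := by
    rw [← log_inv]
    refine log_le_log (by norm_num) ?_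
    rw [le_inv_comm₀ (by norm_num) hm]
    linarith
  have hbound : log 3 - log m / 2 ≤ (log 3 / log (6 / 5) + 1 / 2) * |log m| := by
    rw [abs_of_nonpos (by linarith)]
    have : log 3 ≤ log 3 / log (6 / 5) * -log m := by
      rw [div_mul_eq_mul_div, le_div_iff₀ hc]
      gcongr
    linarith
  have hfin : IsFiniteMeasure (volume.restrict (box 3)) := by
    rw [box, volume_pi, Measure.restrict_pi_pi]
    infer_instance
  have hcont : Continuous fun q : Fin 3 → ℝ =>
      (m + 2 * sin (q 0 / 2) ^ 2 + 2 * sin ((q 2 + p 2) / 2) ^ 2)⁻¹ :=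
    Continuous.inv₀ (by fun_prop) fun x => by positivity
  have hint : Integrable (fun q : Fin 3 → ℝ =>
      (m + 2 * sin (q 0 / 2) ^ 2 + 2 * sin ((q 2 + p 2) / 2) ^ 2)⁻¹)
      (volume.restrict (box 3)) := by
    refine Integrable.of_bound hcont.aestronglyMeasurable m⁻¹ (.of_forall fun q => ?_)
    rw [norm_of_nonneg (by positivity)]
    gcongr
    nlinarith [sq_nonneg (sin (q 0 / 2)), sq_nonneg (sin ((q 2 + p 2) / 2))]
  have hle : ∀ q : Fin 3 → ℝ,
      (lam + 1 / 2 * dhat (Function.update q 1 0 + Function.update p 0 0))⁻¹ ≤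
        (m + 2 * sin (q 0 / 2) ^ 2 + 2 * sin ((q 2 + p 2) / 2) ^ 2)⁻¹ := by
    intro q
    have h : dhat (Function.update q 1 0 + Function.update p 0 0) =
        4 * sin (q 0 / 2) ^ 2 + 4 * sin (p 1 / 2) ^ 2 + 4 * sin ((q 2 + p 2) / 2) ^ 2 := by
      simp [dhat, Fin.sum_univ_three]
    rw [h]
    refine inv_anti₀ (by positivity) ?_
    nlinarith [sq_nonneg (sin (p 1 / 2))]
  have hnonneg : ∀ q : Fin 3 → ℝ,
      0 ≤ (lam + 1 / 2 * dhat (Function.update q 1 0 + Function.update p 0 0))⁻¹ := by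
    intro q
    unfold dhat
    positivity
  calc _ ≤ ((2 * π) ^ 3)⁻¹ * ∫ q in box 3,
        (m + 2 * sin (q 0 / 2) ^ 2 + 2 * sin ((q 2 + p 2) / 2) ^ 2)⁻¹ := by
        gcongr ?_ * ?_
        exact integral_mono_of_nonneg (.of_forall hnonneg) hint (.of_forall hle)
    _ ≤ ((2 * π) ^ 3)⁻¹ * (2 * π * (π ^ 2 * (2 * π * (log 3 - log m / 2)))) := by
        gcongr
        exact setIntegral_box_three_inv_le hm (by linarith)
    _ ≤ ((2 * π) ^ 3)⁻¹ * (2 * π * (π ^ 2 * (2 * π *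
        ((log 3 / log (6 / 5) + 1 / 2) * |log m|)))) := by gcongr
    _ = _ := by ring

end RWOML
end
end

section
/- For every constant C > 0 there exist C' > 0 and λ₀ > 0 such that for all 0 < λ < λ₀, (1/(2π)) ∫_0^{2π} (λ + 4 sin²(t/2) + C λ^{−1/2} sin²(t))^{−1} dt ≥ C' λ^{−1/4}. -/
open MeasureTheory Real Filter Topology Finset

noncomputable section

namespace RWOML

/-- For every `C > 0` there are `C' > 0` and `λ₀ > 0` such that for `0 < λ < λ₀`,
`(1/(2π)) ∫_0^{2π} (λ + 4 sin²(t/2) + C λ^{−1/2} sin²(t))^{−1} dt ≥ C' λ^{−1/4}`. -/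
theorem stmt13 (C : ℝ) (hC : 0 < C) :
    ∃ C' > (0 : ℝ), ∃ lam₀ > (0 : ℝ), ∀ lam : ℝ, 0 < lam → lam < lam₀ →
      C' * lam ^ (-(1 / 4) : ℝ) ≤
        (2 * Real.pi)⁻¹ *
          ∫ t in (0 : ℝ)..(2 * Real.pi),
            (lam + 4 * Real.sin (t / 2) ^ 2 + C * lam ^ (-(1 / 2) : ℝ) * Real.sin t ^ 2)⁻¹ := by
  refine ⟨(2 * Real.pi)⁻¹ * (2 + C)⁻¹, by positivity, 1, one_pos, fun lam hpos hlt => ?_⟩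
  obtain ⟨s, hs, hs1, rfl⟩ : ∃ s : ℝ, 0 < s ∧ s < 1 ∧ lam = s ^ 4 := by
    refine ⟨lam ^ (1 / 4 : ℝ), by positivity,
      Real.rpow_lt_one hpos.le hlt (by norm_num), ?_⟩
    rw [← Real.rpow_natCast, ← Real.rpow_mul hpos.le]
    norm_num
  have hquarter : (s ^ 4) ^ (-(1 / 4) : ℝ) = s⁻¹ := by
    rw [← Real.rpow_natCast, ← Real.rpow_mul hs.le, ← Real.rpow_neg_one]
    norm_num
  have hhalf : (s ^ 4) ^ (-(1 / 2) : ℝ) = (s ^ 2)⁻¹ := by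
    rw [← Real.rpow_natCast, ← Real.rpow_mul hs.le, ← Real.rpow_natCast, ← Real.rpow_neg hs.le]
    norm_num
  rw [hquarter, hhalf, mul_assoc]
  gcongr
  set f : ℝ → ℝ := fun t =>
    (s ^ 4 + 4 * Real.sin (t / 2) ^ 2 + C * (s ^ 2)⁻¹ * Real.sin t ^ 2)⁻¹ with hf
  have hcont : Continuous f := by
    refine Continuous.inv₀ (by fun_prop) fun t => ?_
    positivity
  have hcube : s ^ 3 ≤ 2 * Real.pi := by
    have := pow_le_one₀ (n := 3) hs.le hs1.le
    linarith [Real.pi_gt_three]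
  have hbound : ∀ t ∈ Set.Icc 0 (s ^ 3), ((2 + C) * s ^ 4)⁻¹ ≤ f t := by
    rintro t ⟨ht0, ht⟩
    have hsq : ∀ x : ℝ, Real.sin x ^ 2 ≤ x ^ 2 := fun x => sq_le_sq.mpr Real.abs_sin_le_abs
    have ht2 : t ^ 2 ≤ s ^ 6 := by
      calc t ^ 2 ≤ (s ^ 3) ^ 2 := by gcongr
        _ = s ^ 6 := by ring
    have h64 : s ^ 6 ≤ s ^ 4 := pow_le_pow_of_le_one hs.le hs1.le (by norm_num)
    have hsin : C * (s ^ 2)⁻¹ * Real.sin t ^ 2 ≤ C * s ^ 4 := by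
      calc C * (s ^ 2)⁻¹ * Real.sin t ^ 2 ≤ C * (s ^ 2)⁻¹ * s ^ 6 := by
            gcongr
            exact (hsq t).trans ht2
        _ = C * s ^ 4 := by field_simp
    have hhalfsin := hsq (t / 2)
    refine inv_anti₀ (by positivity) ?_
    nlinarith
  calc (2 + C)⁻¹ * s⁻¹ = ∫ _ in (0 : ℝ)..s ^ 3, ((2 + C) * s ^ 4)⁻¹ := by
        rw [intervalIntegral.integral_const, smul_eq_mul, sub_zero]
        field_simp
    _ ≤ ∫ t in (0 : ℝ)..s ^ 3, f t :=
        intervalIntegral.integral_mono_on (by positivity)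
          (continuous_const.intervalIntegrable _ _) (hcont.intervalIntegrable _ _) hbound
    _ ≤ ∫ t in (0 : ℝ)..(2 * Real.pi), f t :=
        intervalIntegral.integral_mono_interval le_rfl (by positivity) hcube
          (Eventually.of_forall fun t => by
            simp only [hf, Pi.zero_apply]
            positivity)
          (hcont.intervalIntegrable _ _)

end RWOML
end
end

section
/- For every constant C > 0 there exist C' > 0 and λ₀ ∈ (0, 1/3] such that for all 0 < λ < λ₀, (2π)^{−3} ∫_{𝕋³} (λ + d̂(p^{(1)}) + C Σ_{j=2}^3 |log(λ + (1/2) sin²(p_j/2))| sin²(p_j))^{−1} dp ≥ C' log log(λ^{−1}). -/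
open MeasureTheory Real Filter Topology Finset

noncomputable section

namespace RWOML

/-- The denominator of the integrand in `stmt14`. -/
def denom (C lam : ℝ) (p : Fin 3 → ℝ) : ℝ :=
  lam + dhat (Function.update p 0 0)
    + C * (|Real.log (lam + (1 / 2) * Real.sin (p 1 / 2) ^ 2)| * Real.sin (p 1) ^ 2
        + |Real.log (lam + (1 / 2) * Real.sin (p 2 / 2) ^ 2)| * Real.sin (p 2) ^ 2)

lemma dhat_update_zero (p : Fin 3 → ℝ) :
    dhat (Function.update p 0 0) = 4 * Real.sin (p 1 / 2) ^ 2 + 4 * Real.sin (p 2 / 2) ^ 2 := by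
  simp [dhat, Fin.sum_univ_three]

lemma le_denom {C lam : ℝ} (hC : 0 ≤ C) (p : Fin 3 → ℝ) : lam ≤ denom C lam p := by
  unfold denom
  rw [dhat_update_zero]
  have : 0 ≤ C * (|Real.log (lam + (1 / 2) * Real.sin (p 1 / 2) ^ 2)| * Real.sin (p 1) ^ 2
        + |Real.log (lam + (1 / 2) * Real.sin (p 2 / 2) ^ 2)| * Real.sin (p 2) ^ 2) := by
    positivity
  nlinarith [sq_nonneg (Real.sin (p 1 / 2)), sq_nonneg (Real.sin (p 2 / 2))]

lemma continuous_inv_denom {C lam : ℝ} (hC : 0 ≤ C) (hlam : 0 < lam) :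
    Continuous fun p => (denom C lam p)⁻¹ := by
  refine Continuous.inv₀ ?_ fun p => (hlam.trans_le (le_denom hC p)).ne'
  have hlog (j : Fin 3) : Continuous fun p : Fin 3 → ℝ =>
      Real.log (lam + (1 / 2) * Real.sin (p j / 2) ^ 2) :=
    Continuous.log (by fun_prop) fun p => by positivity
  have h1 := hlog 1
  have h2 := hlog 2
  unfold denom
  simp only [dhat_update_zero]
  fun_prop

/-- The dyadic cube with two sides `[2^{-k-1}, 2^{-k})`. -/
def dyadicBox (k : ℕ) : Set (Fin 3 → ℝ) :=
  Set.univ.pi ![Set.Ico 0 1, Set.Ico ((1 / 2) ^ (k + 1)) ((1 / 2) ^ k),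
    Set.Ico ((1 / 2) ^ (k + 1)) ((1 / 2) ^ k)]

lemma mem_dyadicBox {k : ℕ} {p : Fin 3 → ℝ} : p ∈ dyadicBox k ↔
    p 0 ∈ Set.Ico (0 : ℝ) 1 ∧ p 1 ∈ Set.Ico ((1 / 2 : ℝ) ^ (k + 1)) ((1 / 2) ^ k) ∧
      p 2 ∈ Set.Ico ((1 / 2 : ℝ) ^ (k + 1)) ((1 / 2) ^ k) := by
  simp [dyadicBox, Set.mem_pi, Fin.forall_fin_succ]

lemma measurableSet_dyadicBox (k : ℕ) : MeasurableSet (dyadicBox k) := by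
  refine MeasurableSet.univ_pi fun i => ?_
  fin_cases i <;> exact measurableSet_Ico

lemma volume_dyadicBox (k : ℕ) :
    volume (dyadicBox k) = ENNReal.ofReal (((1 / 2) ^ (k + 1)) ^ 2) := by
  have h : (1 / 2 : ℝ) ^ k - (1 / 2) ^ (k + 1) = (1 / 2) ^ (k + 1) := by ring
  rw [dyadicBox, volume_pi_pi, Fin.prod_univ_three]
  simp only [Matrix.cons_val, Real.volume_Ico, h]
  rw [sub_zero, ENNReal.ofReal_one, one_mul, sq, ENNReal.ofReal_mul (by positivity)]

lemma dyadicBox_subset_box (k : ℕ) : dyadicBox k ⊆ box 3 := by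
  intro p hp
  obtain ⟨⟨h0, h0'⟩, ⟨h1, h1'⟩, ⟨h2, h2'⟩⟩ := mem_dyadicBox.1 hp
  have hk : (1 / 2 : ℝ) ^ k ≤ 1 := pow_le_one₀ (by norm_num) (by norm_num)
  have hk' : (0 : ℝ) < (1 / 2) ^ (k + 1) := by positivity
  have hpi := Real.pi_gt_three
  suffices ∀ i, p i ∈ Set.Ico 0 (2 * Real.pi) from fun i _ => this i
  rw [Fin.forall_fin_succ, Fin.forall_fin_two]
  refine ⟨⟨h0, by linarith⟩, ⟨hk'.le.trans h1, h1'.trans ?_⟩, ⟨hk'.le.trans h2, h2'.trans ?_⟩⟩ <;>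
    linarith

lemma disjoint_dyadicBox {k l : ℕ} (h : k ≠ l) : Disjoint (dyadicBox k) (dyadicBox l) := by
  wlog hkl : k < l generalizing k l
  · exact (this h.symm (by omega)).symm
  refine Set.disjoint_left.2 fun p hk hl => ?_
  have h1 := (mem_dyadicBox.1 hk).2.1.1
  have h2 := (mem_dyadicBox.1 hl).2.1.2
  have : (1 / 2 : ℝ) ^ l ≤ (1 / 2) ^ (k + 1) :=
    pow_le_pow_of_le_one (by norm_num) (by norm_num) hkl
  linarith

lemma abs_log_le_of_dyadic {lam x : ℝ} (hlam : 0 < lam) (hlam' : lam ≤ 1 / 2) {k : ℕ}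
    (hk : 1 ≤ k) (hx : (1 / 2) ^ (k + 1) ≤ x) (hx' : x ≤ (1 / 2) ^ k) :
    |Real.log (lam + (1 / 2) * Real.sin (x / 2) ^ 2)| ≤ 9 * k := by
  have hk1 : (1 / 2 : ℝ) ^ k ≤ 1 := pow_le_one₀ (by norm_num) (by norm_num)
  have hx0 : 0 < x := lt_of_lt_of_le (by positivity) hx
  have hsin : x / 4 ≤ Real.sin (x / 2) := by
    have h := Real.mul_le_sin (x := x / 2) (by linarith) (by linarith [Real.pi_gt_three])
    have h' : 1 / 2 ≤ 2 / Real.pi := by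
      rw [div_le_div_iff₀ two_pos Real.pi_pos]
      linarith [Real.pi_le_four]
    nlinarith
  have hlow : (1 / 2 : ℝ) ^ (2 * k + 7) ≤ lam + (1 / 2) * Real.sin (x / 2) ^ 2 := by
    have h1 : (1 / 2 : ℝ) ^ (k + 1) / 4 ≤ Real.sin (x / 2) := by linarith
    have h2 := pow_le_pow_left₀ (by positivity) h1 2
    have h3 : (1 / 2 : ℝ) ^ (2 * k + 7) = (1 / 2) * ((1 / 2 : ℝ) ^ (k + 1) / 4) ^ 2 := by ring
    linarith
  have hup : lam + (1 / 2) * Real.sin (x / 2) ^ 2 ≤ 1 := by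
    linarith [Real.sin_sq_le_one (x / 2)]
  have hpos : 0 < lam + (1 / 2) * Real.sin (x / 2) ^ 2 := by positivity
  rw [abs_of_nonpos (Real.log_nonpos hpos.le hup)]
  have hlog := Real.log_le_log (by positivity) hlow
  rw [Real.log_pow, one_div, Real.log_inv] at hlog
  push_cast at hlog
  have hk' : (1 : ℝ) ≤ k := by exact_mod_cast hk
  nlinarith [Real.log_two_lt_d9, Real.log_two_gt_d9]

lemma denom_le_of_mem_dyadicBox {C lam : ℝ} (hC : 0 ≤ C) (hlam : 0 < lam) (hlam' : lam ≤ 1 / 2)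
    {k : ℕ} (hk : 1 ≤ k) (hlk : lam ≤ ((1 / 2) ^ k) ^ 2) {p : Fin 3 → ℝ}
    (hp : p ∈ dyadicBox k) :
    denom C lam p ≤ (3 + 18 * C) * k * ((1 / 2) ^ k) ^ 2 := by
  obtain ⟨-, ⟨h1, h1'⟩, ⟨h2, h2'⟩⟩ := mem_dyadicBox.1 hp
  have hpos : (0 : ℝ) < (1 / 2) ^ (k + 1) := by positivity
  have hk' : (1 : ℝ) ≤ k := by exact_mod_cast hk
  set r : ℝ := (1 / 2) ^ k
  have hbound {x : ℝ} (hx : 0 ≤ x) (hxr : x ≤ r) :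
      4 * Real.sin (x / 2) ^ 2 ≤ r ^ 2 ∧ Real.sin x ^ 2 ≤ r ^ 2 := by
    have a := Real.sin_sq_le_sq (x := x)
    have b := Real.sin_sq_le_sq (x := x / 2)
    constructor <;> nlinarith
  obtain ⟨a1, b1⟩ := hbound (hpos.le.trans h1) h1'.le
  obtain ⟨a2, b2⟩ := hbound (hpos.le.trans h2) h2'.le
  have c1 := mul_le_mul (abs_log_le_of_dyadic hlam hlam' hk h1 h1'.le) b1 (sq_nonneg _)
    (by positivity)
  have c2 := mul_le_mul (abs_log_le_of_dyadic hlam hlam' hk h2 h2'.le) b2 (sq_nonneg _)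
    (by positivity)
  have c3 := mul_le_mul_of_nonneg_left (add_le_add c1 c2) hC
  rw [denom, dhat_update_zero]
  nlinarith [sq_nonneg r]

lemma integrableOn_inv_denom_box {C lam : ℝ} (hC : 0 ≤ C) (hlam : 0 < lam) :
    IntegrableOn (fun p => (denom C lam p)⁻¹) (box 3) := by
  refine ((continuous_inv_denom hC hlam).integrableOn_Icc
    (a := fun _ => 0) (b := fun _ => 2 * Real.pi)).mono_set fun p hp => ?_
  exact ⟨fun i => (hp i trivial).1, fun i => (hp i trivial).2.le⟩

lemma le_setIntegral_dyadicBox {C lam : ℝ} (hC : 0 ≤ C) (hlam : 0 < lam) (hlam' : lam ≤ 1 / 2)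
    {k : ℕ} (hk : 1 ≤ k) (hlk : lam ≤ ((1 / 2) ^ k) ^ 2) :
    (4 * (3 + 18 * C))⁻¹ * (k : ℝ)⁻¹ ≤ ∫ p in dyadicBox k, (denom C lam p)⁻¹ := by
  have hk' : (0 : ℝ) < k := by exact_mod_cast hk
  have h := setIntegral_ge_of_const_le_real (μ := volume) (s := dyadicBox k)
    (f := fun p => (denom C lam p)⁻¹) (c := ((3 + 18 * C) * k * ((1 / 2) ^ k) ^ 2)⁻¹)
    (measurableSet_dyadicBox k) (by simp [volume_dyadicBox])
    (fun p hp => inv_anti₀ (hlam.trans_le (le_denom hC p))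
      (denom_le_of_mem_dyadicBox hC hlam hlam' hk hlk hp))
    ((integrableOn_inv_denom_box hC hlam).mono_set (dyadicBox_subset_box k))
  refine le_of_eq_of_le ?_ h
  rw [measureReal_def, volume_dyadicBox, ENNReal.toReal_ofReal (by positivity)]
  have : (0 : ℝ) < 3 + 18 * C := by positivity
  field_simp
  ring

lemma log_le_setIntegral_box {C lam : ℝ} (hC : 0 ≤ C) (hlam : 0 < lam) (hlam' : lam ≤ 1 / 2)
    {n : ℕ} (hn : lam ≤ ((1 / 2) ^ n) ^ 2) :
    (4 * (3 + 18 * C))⁻¹ * Real.log (n + 1) ≤ ∫ p in box 3, (denom C lam p)⁻¹ := by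
  have hint := integrableOn_inv_denom_box hC hlam
  have hnonneg (p : Fin 3 → ℝ) : 0 ≤ (denom C lam p)⁻¹ :=
    inv_nonneg.2 (hlam.le.trans (le_denom hC p))
  calc (4 * (3 + 18 * C))⁻¹ * Real.log (n + 1)
      ≤ (4 * (3 + 18 * C))⁻¹ * ∑ k ∈ Finset.Icc 1 n, (k : ℝ)⁻¹ := by
        gcongr
        have := log_add_one_le_harmonic n
        rw [harmonic_eq_sum_Icc] at this
        push_cast at this
        exact this
    _ ≤ ∑ k ∈ Finset.Icc 1 n, ∫ p in dyadicBox k, (denom C lam p)⁻¹ := by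
        rw [Finset.mul_sum]
        refine Finset.sum_le_sum fun k hk => ?_
        obtain ⟨hk1, hkn⟩ := Finset.mem_Icc.1 hk
        refine le_setIntegral_dyadicBox hC hlam hlam' hk1 (hn.trans ?_)
        gcongr ?_ ^ 2
        exact pow_le_pow_of_le_one (by norm_num) (by norm_num) hkn
    _ = ∫ p in ⋃ k ∈ Finset.Icc 1 n, dyadicBox k, (denom C lam p)⁻¹ :=
        (integral_biUnion_finset _ (fun k _ => measurableSet_dyadicBox k)
          (fun k _ l _ h => disjoint_dyadicBox h)
          fun k _ => hint.mono_set (dyadicBox_subset_box k)).symm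
    _ ≤ ∫ p in box 3, (denom C lam p)⁻¹ :=
        setIntegral_mono_set hint (Eventually.of_forall hnonneg)
          (Set.iUnion₂_subset fun k _ => dyadicBox_subset_box k).eventuallyLE

/-- If `4^{-n-1} < lam < exp (-4)`, then `log (n + 1)` is at least half of `log (log lam⁻¹)`. -/
lemma half_log_log_inv_le {lam : ℝ} (hlam : 0 < lam) (hlam' : lam < Real.exp (-4)) {n : ℕ}
    (hn : lam⁻¹ < 4 ^ (n + 1)) : Real.log (Real.log lam⁻¹) / 2 ≤ Real.log (n + 1) := by
  have hL : 4 < Real.log lam⁻¹ := by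
    have := Real.log_lt_log hlam hlam'
    rw [Real.log_exp] at this
    rw [Real.log_inv]
    linarith
  have hlt : Real.log lam⁻¹ < 2 * (n + 1) := by
    have h := Real.log_lt_log (inv_pos.2 hlam) hn
    rw [Real.log_pow, show (4 : ℝ) = 2 ^ 2 by norm_num, Real.log_pow] at h
    push_cast at h
    nlinarith [Real.log_two_lt_d9]
  have h1 := Real.log_lt_log (by linarith) hlt
  have h2 := Real.log_lt_log (by norm_num) hL
  rw [Real.log_mul two_ne_zero (by positivity)] at h1
  rw [show (4 : ℝ) = 2 ^ 2 by norm_num, Real.log_pow] at h2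
  push_cast at h2
  linarith

/-- For every `C > 0` there are `C' > 0` and `λ₀ ∈ (0,1/3]` with, for `0 < λ < λ₀`,
`(2π)^{−3} ∫_{𝕋³} (λ + d̂(p^{(1)}) + C Σ_{j=2}^3 |log(λ + (1/2)sin²(p_j/2))| sin²(p_j))^{−1} dp
  ≥ C' log log(λ^{−1})`. -/
theorem stmt14 (C : ℝ) (hC : 0 < C) :
    ∃ C' > (0 : ℝ), ∃ lam₀ : ℝ, 0 < lam₀ ∧ lam₀ ≤ 1 / 3 ∧
      ∀ lam : ℝ, 0 < lam → lam < lam₀ →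
        C' * Real.log (Real.log lam⁻¹) ≤
          ((2 * Real.pi) ^ 3)⁻¹ *
            ∫ p in box 3,
              (lam + dhat (Function.update p 0 0)
                + C * (|Real.log (lam + (1 / 2) * Real.sin (p 1 / 2) ^ 2)| * Real.sin (p 1) ^ 2
                    + |Real.log (lam + (1 / 2) * Real.sin (p 2 / 2) ^ 2)| * Real.sin (p 2) ^ 2))⁻¹ := by
  have hexp : Real.exp (-4) ≤ 1 / 3 := by
    rw [Real.exp_neg, ← one_div]
    exact one_div_le_one_div_of_le (by norm_num) (by linarith [Real.add_one_le_exp (4 : ℝ)])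
  refine ⟨((2 * Real.pi) ^ 3)⁻¹ * ((4 * (3 + 18 * C))⁻¹ / 2), by positivity, Real.exp (-4),
    Real.exp_pos _, hexp, fun lam hlam hlt => ?_⟩
  obtain ⟨n, hn, hn'⟩ := exists_nat_pow_near
    ((one_le_inv₀ hlam).2 (by linarith) : 1 ≤ lam⁻¹) (by norm_num : (1 : ℝ) < 4)
  have hlow : lam ≤ ((1 / 2) ^ n) ^ 2 := by
    have h := (le_inv_comm₀ (by positivity) hlam).1 hn
    rwa [← inv_pow, show (4 : ℝ)⁻¹ = (1 / 2) ^ 2 by norm_num, ← pow_mul, mul_comm, pow_mul] at h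
  rw [mul_assoc]
  gcongr
  refine le_trans ?_ (log_le_setIntegral_box hC.le hlam (by linarith) hlow)
  rw [div_mul_eq_mul_div, mul_div_assoc]
  gcongr
  exact half_log_log_inv_le hlam hlt hn'

end RWOML
end
end

section
/- There exist C' > 0 and λ₀ ∈ (0, 1/3] such that for all 0 < λ < λ₀, ∫_0^π ∫_0^π (λ + x² + y² + x² |log(λ + x²)| + y² |log(λ + y²)|)^{−1} dx dy ≥ C' log log(λ^{−1}). -/
open MeasureTheory Real Filter Topology Finset

noncomputable section

namespace RWOML

/-- The integrand `(λ + x² + y² + x²|log(λ+x²)| + y²|log(λ+y²)|)⁻¹`. -/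
def kernel (lam x y : ℝ) : ℝ :=
  (lam + x ^ 2 + y ^ 2 + x ^ 2 * |Real.log (lam + x ^ 2)|
    + y ^ 2 * |Real.log (lam + y ^ 2)|)⁻¹

lemma kernel_nonneg {lam : ℝ} (hlam : 0 < lam) (x y : ℝ) : 0 ≤ kernel lam x y := by
  unfold kernel
  positivity

lemma continuous_kernel {lam : ℝ} (hlam : 0 < lam) :
    Continuous fun p : ℝ × ℝ => kernel lam p.1 p.2 := by
  unfold kernel
  have hpos (x : ℝ) : lam + x ^ 2 ≠ 0 := by positivity
  refine Continuous.inv₀ ?_ fun p => by positivity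
  have h₁ : Continuous fun p : ℝ × ℝ => Real.log (lam + p.1 ^ 2) :=
    Continuous.log (by fun_prop) fun p => hpos p.1
  have h₂ : Continuous fun p : ℝ × ℝ => Real.log (lam + p.2 ^ 2) :=
    Continuous.log (by fun_prop) fun p => hpos p.2
  fun_prop

lemma abs_log_add_sq_le {lam z : ℝ} (hlam : 0 ≤ lam) (hz : 0 < z) (h : lam + z ^ 2 ≤ 1) :
    |Real.log (lam + z ^ 2)| ≤ 2 * -Real.log z := by
  have hz2 : 0 < z ^ 2 := by positivity
  rw [abs_of_nonpos (Real.log_nonpos (by positivity) h)]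
  have := Real.log_le_log hz2 (le_add_of_nonneg_left hlam)
  rw [Real.log_pow] at this
  push_cast at this
  linarith

lemma exp_neg_one_lt_half : Real.exp (-1) < 1 / 2 := by
  have := Real.exp_neg_one_lt_d9
  linarith

lemma le_kernel {lam x y : ℝ} (hlam : 0 < lam) (hx : 0 < x) (hlx : lam ≤ x ^ 2)
    (hxe : x ≤ Real.exp (-1)) (hxy : x / 2 ≤ y) (hyx : y ≤ x) :
    (9 * x ^ 2 * -Real.log x)⁻¹ ≤ kernel lam x y := by
  have hy : 0 < y := by linarith
  have hhalf := exp_neg_one_lt_half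
  have hyx2 : y ^ 2 ≤ x ^ 2 := by gcongr
  have hx2 : x ^ 2 ≤ 1 / 4 := by nlinarith
  have hL : 1 ≤ -Real.log x := by
    have := Real.log_le_log hx hxe
    rw [Real.log_exp] at this
    linarith
  have hlogx := abs_log_add_sq_le hlam.le hx (by linarith)
  have hlogy := abs_log_add_sq_le hlam.le hy (by linarith)
  have hlog : -Real.log y ≤ -Real.log x + 1 := by
    have := Real.log_le_log (by positivity) hxy
    rw [Real.log_div hx.ne' two_ne_zero] at this
    linarith [Real.log_two_lt_d9]
  unfold kernel
  gcongr
  have h₁ : x ^ 2 * |Real.log (lam + x ^ 2)| ≤ x ^ 2 * (2 * -Real.log x) := by gcongr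
  have h₂ : y ^ 2 * |Real.log (lam + y ^ 2)| ≤ x ^ 2 * (2 * (-Real.log x + 1)) := by
    gcongr
    linarith
  nlinarith

lemma le_integral_kernel {lam x : ℝ} (hlam : 0 < lam) (hx : 0 < x) (hlx : lam ≤ x ^ 2)
    (hxe : x ≤ Real.exp (-1)) :
    1 / 18 * (x * -Real.log x)⁻¹ ≤ ∫ y in (0 : ℝ)..Real.pi, kernel lam x y := by
  have hcont : Continuous fun y => kernel lam x y :=
    (continuous_kernel hlam).comp (by fun_prop : Continuous fun y : ℝ => (x, y))
  have hxpi : x ≤ Real.pi := by linarith [exp_neg_one_lt_half, Real.pi_gt_three]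
  calc 1 / 18 * (x * -Real.log x)⁻¹
      = ∫ _ in (x / 2)..x, (9 * x ^ 2 * -Real.log x)⁻¹ := by
        have : Real.log x ≠ 0 :=
          (Real.log_neg hx (by linarith [exp_neg_one_lt_half])).ne
        rw [intervalIntegral.integral_const, smul_eq_mul]
        field_simp
        norm_num
    _ ≤ ∫ y in (x / 2)..x, kernel lam x y :=
        intervalIntegral.integral_mono_on (by linarith) (by simp)
          (hcont.intervalIntegrable _ _) fun y hy => le_kernel hlam hx hlx hxe hy.1 hy.2
    _ ≤ ∫ y in (0 : ℝ)..Real.pi, kernel lam x y :=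
        intervalIntegral.integral_mono_interval (by linarith) (by linarith) hxpi
          (.of_forall fun y => kernel_nonneg hlam x y) (hcont.intervalIntegrable _ _)

lemma continuousOn_inv_mul_neg_log {a b : ℝ} (ha : 0 < a) (hb : b < 1) :
    ContinuousOn (fun x => (x * -Real.log x)⁻¹) (Set.Icc a b) := by
  have hpos : ∀ x ∈ Set.Icc a b, 0 < x := fun x hx => ha.trans_le hx.1
  refine ContinuousOn.inv₀ (continuousOn_id.mul
    (ContinuousOn.neg (continuousOn_id.log fun x hx => (hpos x hx).ne'))) fun x hx => ?_
  exact mul_ne_zero (hpos x hx).ne'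
    (neg_ne_zero.2 (Real.log_neg (hpos x hx) (hx.2.trans_lt hb)).ne)

lemma integral_inv_mul_neg_log {a b : ℝ} (ha : 0 < a) (hab : a ≤ b) (hb : b < 1) :
    ∫ x in a..b, (x * -Real.log x)⁻¹
      = Real.log (-Real.log a) - Real.log (-Real.log b) := by
  have hderiv : ∀ x ∈ Set.uIcc a b,
      HasDerivAt (fun x => -Real.log (-Real.log x)) (x * -Real.log x)⁻¹ x := by
    intro x hx
    rw [Set.uIcc_of_le hab] at hx
    have hx0 : 0 < x := ha.trans_le hx.1
    have hlog : Real.log x ≠ 0 := (Real.log_neg hx0 (hx.2.trans_lt hb)).ne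
    refine ((Real.hasDerivAt_log hx0.ne').fun_neg.log (neg_ne_zero.2 hlog)).fun_neg.congr_deriv ?_
    field_simp
  rw [intervalIntegral.integral_eq_sub_of_hasDerivAt hderiv
    ((continuousOn_inv_mul_neg_log ha hb).intervalIntegrable_of_Icc hab)]
  ring

/-- There are `C' > 0` and `λ₀ ∈ (0,1/3]` such that for all `0 < λ < λ₀`,
`∫_0^π ∫_0^π (λ + x² + y² + x²|log(λ+x²)| + y²|log(λ+y²)|)^{−1} dx dy ≥ C' log log(λ^{−1})`. -/
theorem stmt15 :
    ∃ C' > (0 : ℝ), ∃ lam₀ : ℝ, 0 < lam₀ ∧ lam₀ ≤ 1 / 3 ∧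
      ∀ lam : ℝ, 0 < lam → lam < lam₀ →
        C' * Real.log (Real.log lam⁻¹) ≤
          ∫ x in (0 : ℝ)..Real.pi, ∫ y in (0 : ℝ)..Real.pi,
            (lam + x ^ 2 + y ^ 2 + x ^ 2 * |Real.log (lam + x ^ 2)|
              + y ^ 2 * |Real.log (lam + y ^ 2)|)⁻¹ := by
  refine ⟨1 / 36, by norm_num, Real.exp (-4), Real.exp_pos _, ?_, fun lam hlam hlt => ?_⟩
  · have : Real.exp (-4) ≤ Real.exp (-1) ^ 2 := by
      rw [← Real.exp_nat_mul]
      gcongr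
      norm_num
    nlinarith [exp_neg_one_lt_half, Real.exp_pos (-1)]
  have hloglam : 4 < -Real.log lam := by
    have := Real.log_lt_log hlam hlt
    rw [Real.log_exp] at this
    linarith
  have ha : 0 < √lam := Real.sqrt_pos.2 hlam
  have hloga : -Real.log √lam = -Real.log lam / 2 := by
    rw [Real.log_sqrt hlam.le]
    ring
  have hab : √lam ≤ Real.exp (-1) := by
    rw [← Real.log_le_iff_le_exp ha]
    linarith
  have hb : Real.exp (-1) < 1 := by linarith [exp_neg_one_lt_half]
  have hcont : Continuous fun x => ∫ y in (0 : ℝ)..Real.pi, kernel lam x y :=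
    intervalIntegral.continuous_parametric_intervalIntegral_of_continuous'
      (continuous_kernel hlam) _ _
  calc 1 / 36 * Real.log (Real.log lam⁻¹)
      ≤ 1 / 18 * (Real.log (-Real.log √lam) - Real.log (-Real.log (Real.exp (-1)))) := by
        have h4 : 2 * Real.log 2 ≤ Real.log (-Real.log lam) := by
          have := Real.log_le_log (by norm_num) hloglam.le
          rwa [show (4 : ℝ) = 2 ^ 2 by norm_num, Real.log_pow, Nat.cast_ofNat] at this
        rw [hloga, Real.log_div (by linarith) two_ne_zero, Real.log_exp, neg_neg,
          Real.log_one, Real.log_inv]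
        linarith
    _ = ∫ x in √lam..Real.exp (-1), 1 / 18 * (x * -Real.log x)⁻¹ := by
        rw [intervalIntegral.integral_const_mul, integral_inv_mul_neg_log ha hab hb]
    _ ≤ ∫ x in √lam..Real.exp (-1), ∫ y in (0 : ℝ)..Real.pi, kernel lam x y :=
        intervalIntegral.integral_mono_on hab
          (((continuousOn_inv_mul_neg_log ha hb).intervalIntegrable_of_Icc hab).const_mul _)
          (hcont.intervalIntegrable _ _) fun x hx =>
            le_integral_kernel hlam (ha.trans_le hx.1) ((Real.sqrt_le_left
              (ha.le.trans hx.1)).1 hx.1) hx.2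
    _ ≤ ∫ x in (0 : ℝ)..Real.pi, ∫ y in (0 : ℝ)..Real.pi, kernel lam x y :=
        intervalIntegral.integral_mono_interval ha.le hab (by linarith [Real.pi_gt_three])
          (.of_forall fun x => intervalIntegral.integral_nonneg Real.pi_pos.le
            fun y _ => kernel_nonneg hlam x y) (hcont.intervalIntegrable _ _)

end RWOML
end
end
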